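/- (Lemma 2, converse direction: constraining f_sh = f_ra in the arc-eager model yields exactly the arc-hybrid hypothesis space.) Fix n ≥ 1 and any arc-eager parameterization (f_sh, f_ra, f_rl, f_re) satisfying f_sh = f_ra. Define the arc-hybrid parameterization g_sh = f_sh, g_rr = f_re, g_rl = f_rl. Then for every complete arc-eager transition sequence t' for a sentence of length n there exists a complete arc-hybrid transition sequence t for the same sentence with A(t) = A(t') and G(t) = F(t'). (The sequence t is obtained from t' by replacing each ra by sh and each re by rr, keeping all other transitions in order.) -/

import Mathlib

/-- A parser configuration: a stack of indices (head of the list = top of stack),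
a buffer of indices (head of the list = front of buffer), and a set of arcs
`(h, m)` meaning `h` is the head of modifier `m`. -/
structure Config where
  stack : List ℕ
  buffer : List ℕ
  arcs : Finset (ℕ × ℕ)

/-- Initial configuration for a sentence of length `n`:
empty stack, buffer `[0, 1, …, n]` (ROOT is index 0), empty arc set. -/
def initConfig (n : ℕ) : Config := ⟨[], List.range (n + 1), ∅⟩

/-- Stack-top feature of a configuration: `none` plays the role of the dummy index ⊥
used when the stack is empty. -/
def stackFeat (c : Config) : Option ℕ := c.stack.head?

/-- Buffer-front feature of a configuration: the end-marker index `n + 1`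
when the buffer is empty. -/
def bufFeat (n : ℕ) (c : Config) : ℕ := c.buffer.headD (n + 1)

/-- Arc-eager transition labels. -/
inductive ETrans
  | sh | rl | ra | re
deriving DecidableEq

/-- Single arc-eager transitions between configurations. -/
inductive EStep : Config → ETrans → Config → Prop
  | sh (σ b β A) : EStep ⟨σ, b :: β, A⟩ .sh ⟨b :: σ, β, A⟩
  | rl (s σ b β A) (h : ∀ x, (x, s) ∉ A) :
      EStep ⟨s :: σ, b :: β, A⟩ .rl ⟨σ, b :: β, insert (b, s) A⟩
  | ra (s σ b β A) :
      EStep ⟨s :: σ, b :: β, A⟩ .ra ⟨b :: s :: σ, β, insert (s, b) A⟩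
  | re (s σ β A) (h : ∃ x, (x, s) ∈ A) :
      EStep ⟨s :: σ, β, A⟩ .re ⟨σ, β, A⟩

/-- `ETrace c t c'` holds when `t` is a list of (configuration, transition) pairs,
each transition taken in the recorded configuration, leading from `c` to `c'`. -/
inductive ETrace : Config → List (Config × ETrans) → Config → Prop
  | nil (c) : ETrace c [] c
  | cons {c c' cf : Config} {τ : ETrans} {rest} :
      EStep c τ c' → ETrace c' rest cf → ETrace c ((c, τ) :: rest) cf

/-- Score of an arc-eager transition sequence under parameterization
`(fsh, fra, frl, fre)`: the sum, over the transitions, of the corresponding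
scoring function evaluated at the feature pair of the configuration in which
the transition is taken. -/
def escore (n : ℕ) (fsh fra frl fre : Option ℕ → ℕ → ℝ)
    (t : List (Config × ETrans)) : ℝ :=
  (t.map fun e =>
    (match e.2 with
      | ETrans.sh => fsh
      | ETrans.ra => fra
      | ETrans.rl => frl
      | ETrans.re => fre) (stackFeat e.1) (bufFeat n e.1)).sum

/-- Arc-hybrid transition labels. -/
inductive HTrans
  | sh | rr | rl
deriving DecidableEq

/-- Single arc-hybrid transitions between configurations. -/
inductive HStep : Config → HTrans → Config → Prop
  | sh (σ b β A) : HStep ⟨σ, b :: β, A⟩ .sh ⟨b :: σ, β, A⟩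
  | rr (s0 s1 σ β A) :
      HStep ⟨s0 :: s1 :: σ, β, A⟩ .rr ⟨s1 :: σ, β, insert (s1, s0) A⟩
  | rl (s σ b β A) :
      HStep ⟨s :: σ, b :: β, A⟩ .rl ⟨σ, b :: β, insert (b, s) A⟩

/-- `HTrace c t c'` holds when `t` is a list of (configuration, transition) pairs,
each transition taken in the recorded configuration, leading from `c` to `c'`. -/
inductive HTrace : Config → List (Config × HTrans) → Config → Prop
  | nil (c) : HTrace c [] c
  | cons {c c' cf : Config} {τ : HTrans} {rest} :
      HStep c τ c' → HTrace c' rest cf → HTrace c ((c, τ) :: rest) cf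

/-- Score of an arc-hybrid transition sequence under parameterization
`(gsh, grr, grl)`. -/
def hscore (n : ℕ) (gsh grr grl : Option ℕ → ℕ → ℝ)
    (t : List (Config × HTrans)) : ℝ :=
  (t.map fun e =>
    (match e.2 with
      | HTrans.sh => gsh
      | HTrans.rr => grr
      | HTrans.rl => grl) (stackFeat e.1) (bufFeat n e.1)).sum

structure SimInv (σ β : List ℕ) (A A' : Finset (ℕ × ℕ)) : Prop where
  nd : (σ ++ β).Nodup
  buf : ∀ m ∈ β, ∀ x, (x, m) ∉ A
  sub : A' ⊆ A
  adj : ∀ x m, (x, m) ∈ A → m ∈ σ → [m, x] <:+: σ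
  cov : ∀ x m, (x, m) ∈ A → (x, m) ∈ A' ∨ m ∈ σ

theorem adj_cons {m x a : ℕ} {l : List ℕ} (h : [m, x] <:+: a :: l) :
    (m = a ∧ ∃ r, l = x :: r) ∨ (m ∈ l ∧ [m, x] <:+: l) := by
  rcases List.infix_cons_iff.1 h with h | h
  · left
    obtain ⟨r, hr⟩ := h
    simp at hr
    exact ⟨hr.1, r, hr.2.symm⟩
  · right
    exact ⟨h.subset (by simp), h⟩

theorem inv_sh {σ β : List ℕ} {b : ℕ} {A A' : Finset (ℕ × ℕ)} (I : SimInv σ (b :: β) A A') :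
    SimInv (b :: σ) β A A' := by
  obtain ⟨nd, buf, sub, adj, cov⟩ := I
  refine ⟨?_, ?_, sub, ?_, ?_⟩
  · exact (List.perm_middle.nodup_iff).1 nd
  · exact fun m hm => buf m (by simp [hm])
  · intro x m h hm
    rcases List.mem_cons.1 hm with rfl | hm
    · exact absurd h (buf _ (by simp) x)
    · exact (adj x m h hm).trans (List.infix_cons (List.infix_refl _))
  · intro x m h
    rcases cov x m h with h | h <;> simp [h]

theorem inv_ra {σ β : List ℕ} {s b : ℕ} {A A' : Finset (ℕ × ℕ)}
    (I : SimInv (s :: σ) (b :: β) A A') :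
    SimInv (b :: s :: σ) β (insert (s, b) A) A' := by
  obtain ⟨nd, buf, sub, adj, cov⟩ := inv_sh I
  refine ⟨nd, ?_, sub.trans (Finset.subset_insert _ _), ?_, ?_⟩
  · intro m hm x h
    rcases Finset.mem_insert.1 h with h | h
    · simp only [Prod.mk.injEq] at h
      rw [h.2] at hm
      simp [hm] at nd
    · exact buf m hm x h
  · intro x m h hm
    rcases Finset.mem_insert.1 h with h | h
    · simp only [Prod.mk.injEq] at h
      rw [h.1, h.2]
      exact ⟨[], σ, by simp⟩
    · exact adj x m h hm
  · intro x m h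
    rcases Finset.mem_insert.1 h with h | h
    · simp only [Prod.mk.injEq] at h
      simp [h.2]
    · exact cov x m h

theorem inv_rl {σ β : List ℕ} {s b : ℕ} {A A' : Finset (ℕ × ℕ)}
    (I : SimInv (s :: σ) (b :: β) A A') (hs : ∀ x, (x, s) ∉ A) :
    SimInv σ (b :: β) (insert (b, s) A) (insert (b, s) A') := by
  obtain ⟨nd, buf, sub, adj, cov⟩ := I
  have nd' := List.nodup_cons.1 nd
  refine ⟨nd'.2, ?_, Finset.insert_subset_insert _ sub, ?_, ?_⟩
  · intro m hm x h
    rcases Finset.mem_insert.1 h with h | h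
    · simp only [Prod.mk.injEq] at h
      rw [h.2] at hm
      exact nd'.1 (List.mem_append_right _ hm)
    · exact buf m hm x h
  · intro x m h hm
    rcases Finset.mem_insert.1 h with h | h
    · simp only [Prod.mk.injEq] at h
      rw [h.2] at hm
      exact absurd (List.mem_append_left _ hm) nd'.1
    · rcases adj_cons (adj x m h (by simp [hm])) with ⟨rfl, -⟩ | h'
      · exact hs x (by assumption) |>.elim
      · exact h'.2
  · intro x m h
    rcases Finset.mem_insert.1 h with h | h
    · left; simp [h]
    · rcases cov x m h with h' | h'
      · left; simp [h']
      · rcases List.mem_cons.1 h' with rfl | h'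
        · exact hs x (by assumption) |>.elim
        · exact Or.inr h'

theorem inv_re {σ β : List ℕ} {s : ℕ} {A A' : Finset (ℕ × ℕ)}
    (I : SimInv (s :: σ) β A A') (hs : ∃ x, (x, s) ∈ A) :
    ∃ s1 r, σ = s1 :: r ∧ SimInv σ β A (insert (s1, s) A') := by
  obtain ⟨nd, buf, sub, adj, cov⟩ := I
  have nd' := List.nodup_cons.1 nd
  have hsσ : s ∉ σ := fun h => nd'.1 (List.mem_append_left _ h)
  have key : ∀ x, (x, s) ∈ A → ∃ r, σ = x :: r := by
    intro x h
    rcases adj_cons (adj x s h (by simp)) with h' | h'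
    · exact h'.2
    · exact absurd h'.1 hsσ
  obtain ⟨s1, hs1⟩ := hs
  obtain ⟨r, hr⟩ := key s1 hs1
  refine ⟨s1, r, hr, nd'.2, buf, Finset.insert_subset hs1 sub, ?_, ?_⟩
  · intro x m h hm
    rcases adj_cons (adj x m h (by simp [hm])) with ⟨rfl, -⟩ | h'
    · exact absurd hm hsσ
    · exact h'.2
  · intro x m h
    rcases cov x m h with h' | h'
    · left; simp [h']
    · rcases List.mem_cons.1 h' with rfl | h'
      · obtain ⟨r', hr'⟩ := key x h
        rw [hr] at hr'
        simp at hr'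
        left; simp [hr'.1]
      · exact Or.inr h'

theorem sim (n : ℕ) (fsh frl fre : Option ℕ → ℕ → ℝ) (c cf : Config)
    (t' : List (Config × ETrans)) (ht' : ETrace c t' cf)
    (hf : ∃ A, cf = ⟨[0], [], A⟩) :
    ∀ A', SimInv c.stack c.buffer c.arcs A' →
    ∃ t : List (Config × HTrans),
      HTrace ⟨c.stack, c.buffer, A'⟩ t cf ∧
      hscore n fsh fre frl t = escore n fsh fsh frl fre t' := by
  induction ht' with
  | nil c =>
    obtain ⟨A, rfl⟩ := hf
    intro A' I
    have : A' = A := by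
      apply Finset.Subset.antisymm I.sub
      rintro ⟨x, m⟩ h
      rcases I.cov x m h with h' | h'
      · exact h'
      · have := (I.adj x m h h').length_le
        simp at this
    subst this
    exact ⟨[], HTrace.nil _, by simp [hscore, escore]⟩
  | cons hstep _ ih =>
    have ih := ih hf
    intro A' I
    cases hstep with
    | sh σ b β A =>
      obtain ⟨t, h1, h2⟩ := ih A' (inv_sh I)
      refine ⟨_, HTrace.cons (HStep.sh _ _ _ _) h1, ?_⟩
      simp only [hscore, escore, List.map_cons, List.sum_cons] at h2 ⊢
      rw [h2]; rfl
    | rl s σ b β A h =>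
      obtain ⟨t, h1, h2⟩ := ih _ (inv_rl I h)
      refine ⟨_, HTrace.cons (HStep.rl _ _ _ _ _) h1, ?_⟩
      simp only [hscore, escore, List.map_cons, List.sum_cons] at h2 ⊢
      rw [h2]; rfl
    | ra s σ b β A =>
      obtain ⟨t, h1, h2⟩ := ih A' (inv_ra I)
      refine ⟨_, HTrace.cons (HStep.sh _ _ _ _) h1, ?_⟩
      simp only [hscore, escore, List.map_cons, List.sum_cons] at h2 ⊢
      rw [h2]; rfl
    | re s σ β A h =>
      obtain ⟨s1, r, rfl, I'⟩ := inv_re I h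
      obtain ⟨t, h1, h2⟩ := ih _ I'
      refine ⟨_, HTrace.cons (HStep.rr _ _ _ _ _) h1, ?_⟩
      simp only [hscore, escore, List.map_cons, List.sum_cons] at h2 ⊢
      rw [h2]; rfl

/-- **Lemma 2, converse direction (constraining `fsh = fra` yields arc-hybrid).**
Fix `n ≥ 1` and an arc-eager parameterization `(fsh, fra, frl, fre)` with
`fsh = fra`, and endow the arc-hybrid system with `gsh = fsh`, `grr = fre`,
`grl = frl`. Then for every complete arc-eager transition sequence `t'` for a
sentence of length `n` there is a complete arc-hybrid transition sequence `t`
producing the same arc set and with `G(t) = F(t')`. -/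
theorem arc_hybrid_matches_constrained_arc_eager
    (n : ℕ) (hn : 1 ≤ n)
    (fsh fra frl fre : Option ℕ → ℕ → ℝ)
    (hconstr : fsh = fra)
    (t' : List (Config × ETrans)) (A : Finset (ℕ × ℕ))
    (ht' : ETrace (initConfig n) t' ⟨[0], [], A⟩) :
    ∃ t : List (Config × HTrans),
      HTrace (initConfig n) t ⟨[0], [], A⟩ ∧
      hscore n fsh fre frl t = escore n fsh fra frl fre t' := by
  subst hconstr
  refine sim n fsh frl fre _ _ t' ht' ⟨A, rfl⟩ ∅ ⟨?_, ?_, ?_, ?_, ?_⟩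
  · simpa [initConfig] using List.nodup_range
  all_goals simp [initConfig]
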